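/- Let N ≥ 1 be an integer and s ∈ (0,1) with N > 2s. Let α ∈ (0, 2s/(N+1)) and set γ := N − 2s + α. Then for every υ ∈ ℝ^N with υ ≠ 0, lim_{μ→0⁺} μ^α ∫_{ℝ^N \ B_4(0)} (1+|z|^α) · (1+|z|²)^{−(N+2s)/2} · |υ+μz|^{−γ} dz = 0. -/

import Mathlib

/-!
Let `γ = N - 2s + α`, `β = N + 2s - α` and `r = |υ| / 2`. The weight
`(1+|z|^α)(1+|z|²)^{-(N+2s)/2}` is at most `2 (1+|z|²)^{-β/2}`, which is integrable since `β > N`.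

* Where `|υ+μz| ≥ r`, the singular factor is at most `r^{-γ}`, so this part of the integral is
  bounded uniformly in `μ`.
* Where `|υ+μz| < r`, necessarily `|z| ≥ r/μ`, so the weight is at most `2 (r/μ)^{-β}`. As `γ < N`,
  `|·|^{-γ}` is integrable on the ball of radius `r`, and the substitution `y = υ+μz` costs a
  factor `μ^{-N}`; this part is therefore `O(μ^{β-N})`.

Multiplying by `μ^α` gives `O(μ^α) + O(μ^{2s})`, which tends to `0`. The restriction to `|z| ≥ 4`
plays no role.
-/

open MeasureTheory Filter
open scoped ENNReal Topology

noncomputable section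

/-- With `p = N + 2s`, the growth `1 + t^α` of the weight is absorbed by lowering the decay exponent
from `p` to `p - α`. -/
lemma weight_le {t α p : ℝ} (ht : 0 ≤ t) (hα : 0 < α) :
    (1 + t ^ α) * (1 + t ^ 2) ^ (-(p / 2)) ≤ 2 * (1 + t ^ 2) ^ (-(p - α) / 2) := by
  have h1 : (1 : ℝ) ≤ 1 + t ^ 2 := by nlinarith [sq_nonneg t]
  have h0 : (0 : ℝ) < 1 + t ^ 2 := by linarith
  have e : (1 + t ^ 2) ^ (-(p - α) / 2) = (1 + t ^ 2) ^ (α / 2) * (1 + t ^ 2) ^ (-(p / 2)) := by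
    rw [← Real.rpow_add h0]; congr 1; ring
  have h2 : (1 : ℝ) ≤ (1 + t ^ 2) ^ (α / 2) := Real.one_le_rpow h1 (by linarith)
  have h3 : t ^ α ≤ (1 + t ^ 2) ^ (α / 2) := by
    have : t ^ α = (t ^ 2) ^ (α / 2) := by
      rw [← Real.rpow_natCast, ← Real.rpow_mul ht]; congr 1; push_cast; ring
    rw [this]
    exact Real.rpow_le_rpow (by positivity) (by linarith) (by linarith)
  rw [e, ← mul_assoc]
  exact mul_le_mul_of_nonneg_right (by linarith) (by positivity)

lemma one_add_sq_rpow_le {t R β : ℝ} (hR : 0 < R) (hRt : R ≤ t) (hβ : 0 < β) :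
    (1 + t ^ 2) ^ (-β / 2) ≤ R ^ (-β) := by
  have e : R ^ (-β) = (R ^ 2) ^ (-β / 2) := by
    rw [← Real.rpow_natCast, ← Real.rpow_mul hR.le]; congr 1; push_cast; ring
  rw [e]
  exact Real.rpow_le_rpow_of_nonpos (by positivity) (by nlinarith) (by linarith)

/-- The substitution `y = υ + μ z` on `ℝ^N`. -/
lemma lintegral_comp_add_smul {N : ℕ} (g : EuclideanSpace ℝ (Fin N) → ℝ≥0∞) (hg : Measurable g)
    (υ : EuclideanSpace ℝ (Fin N)) {μ : ℝ} (hμ : 0 < μ) :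
    ∫⁻ z, g (υ + μ • z) = ENNReal.ofReal (μ ^ (-(N : ℝ))) * ∫⁻ y, g y := by
  have h1 : ∫⁻ z, g (υ + μ • z) = ∫⁻ y, g (υ + y) ∂(Measure.map (μ • ·) volume) := by
    rw [lintegral_map (by fun_prop) (by fun_prop)]
  rw [h1, Measure.map_addHaar_smul _ hμ.ne', lintegral_smul_measure, lintegral_add_left_eq_self,
    smul_eq_mul, finrank_euclideanSpace_fin, abs_of_pos (by positivity), Real.rpow_neg hμ.le,
    Real.rpow_natCast]

lemma lintegral_ball_norm_rpow_lt_top {N : ℕ} (hN : 1 ≤ N) {γ : ℝ} (hγ : γ < N) (r : ℝ) :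
    ∫⁻ y in Metric.ball (0 : EuclideanSpace ℝ (Fin N)) r, ENNReal.ofReal (‖y‖ ^ (-γ)) < ∞ := by
  have h : IntegrableOn (fun y : EuclideanSpace ℝ (Fin N) => ‖y‖ ^ (-γ)) (Metric.ball 0 r) := by
    refine integrableOn_ball_of_norm_le_rpow (C := 1) (α := γ) (by simpa using hN)
      (by simpa using hγ) (Eventually.of_forall fun y => ?_) ?_
    · rw [Real.norm_of_nonneg (by positivity), one_mul]
    · exact (Measurable.pow_const measurable_norm _).aestronglyMeasurable
  exact h.lintegral_lt_top

theorem statement1 (N : ℕ) (hN : 1 ≤ N) (s α : ℝ) (hs : s ∈ Set.Ioo (0 : ℝ) 1)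
    (hNs : 2 * s < N) (hα : α ∈ Set.Ioo (0 : ℝ) (2 * s / ((N : ℝ) + 1)))
    (υ : EuclideanSpace ℝ (Fin N)) (hυ : υ ≠ 0) :
    Tendsto (fun μ : ℝ =>
      ENNReal.ofReal (μ ^ α) *
        ∫⁻ z in (Metric.ball (0 : EuclideanSpace ℝ (Fin N)) 4)ᶜ,
          ENNReal.ofReal ((1 + ‖z‖ ^ α) * (1 + ‖z‖ ^ 2) ^ (-(((N : ℝ) + 2 * s) / 2)) *
            ‖υ + μ • z‖ ^ (-((N : ℝ) - 2 * s + α))))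
      (𝓝[>] (0 : ℝ)) (𝓝 0) := by
  obtain ⟨hs0, -⟩ := hs
  obtain ⟨hα0, hα1⟩ := hα
  have hα2 : α < 2 * s :=
    hα1.trans_le (div_le_self (by linarith) (by linarith [N.cast_nonneg (α := ℝ)]))
  set γ : ℝ := (N : ℝ) - 2 * s + α with hγ
  set β : ℝ := (N : ℝ) + 2 * s - α with hβ
  have hβ0 : 0 < β := by linarith
  have hγ0 : 0 < γ := by linarith
  set r : ℝ := ‖υ‖ / 2 with hr
  have hr0 : 0 < r := by have := norm_pos_iff.mpr hυ; positivity
  set W : ℝ≥0∞ := ∫⁻ z : EuclideanSpace ℝ (Fin N), ENNReal.ofReal ((1 + ‖z‖ ^ 2) ^ (-β / 2))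
    with hW
  have hWfin : W < ∞ :=
    (integrable_rpow_neg_one_add_norm_sq (by simp; linarith)).lintegral_lt_top
  -- `g` is the singular factor, localised to the ball where `r^{-γ}` does not bound it.
  let g : EuclideanSpace ℝ (Fin N) → ℝ≥0∞ :=
    (Metric.ball 0 r).indicator fun y => ENNReal.ofReal (‖y‖ ^ (-γ))
  have hgm : Measurable g :=
    (Measurable.pow_const measurable_norm _).ennreal_ofReal.indicator measurableSet_ball
  set K : ℝ≥0∞ := ∫⁻ y, g y with hK
  have hKfin : K < ∞ := by
    rw [hK, lintegral_indicator measurableSet_ball]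
    exact lintegral_ball_norm_rpow_lt_top hN (by linarith) r
  have pointwise : ∀ μ : ℝ, 0 < μ → ∀ z : EuclideanSpace ℝ (Fin N),
      ENNReal.ofReal ((1 + ‖z‖ ^ α) * (1 + ‖z‖ ^ 2) ^ (-(((N : ℝ) + 2 * s) / 2)) *
            ‖υ + μ • z‖ ^ (-γ)) ≤
        ENNReal.ofReal (2 * r ^ (-γ)) * ENNReal.ofReal ((1 + ‖z‖ ^ 2) ^ (-β / 2)) +
        ENNReal.ofReal (2 * (r / μ) ^ (-β)) * g (υ + μ • z) := by
    intro μ hμ z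
    have hw := weight_le (p := (N : ℝ) + 2 * s) (norm_nonneg z) hα0
    rw [← hβ] at hw
    by_cases hz : ‖υ + μ • z‖ < r
    · have hgz : g (υ + μ • z) = ENNReal.ofReal (‖υ + μ • z‖ ^ (-γ)) :=
        Set.indicator_of_mem (by simpa using hz) _
      refine le_add_of_nonneg_of_le zero_le ?_
      rw [hgz, ← ENNReal.ofReal_mul (by positivity)]
      refine ENNReal.ofReal_le_ofReal (mul_le_mul_of_nonneg_right (hw.trans ?_) (by positivity))
      have h1 : ‖υ‖ ≤ ‖υ + μ • z‖ + μ * ‖z‖ := by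
        have := norm_sub_le (υ + μ • z) (μ • z)
        rwa [add_sub_cancel_right, norm_smul, Real.norm_of_nonneg hμ.le] at this
      have h2 : r / μ ≤ ‖z‖ := by
        rw [div_le_iff₀ hμ]; linarith
      have := one_add_sq_rpow_le (div_pos hr0 hμ) h2 hβ0
      linarith
    · refine le_add_of_le_of_nonneg ?_ zero_le
      rw [← ENNReal.ofReal_mul (by positivity)]
      refine ENNReal.ofReal_le_ofReal ?_
      have h1 : ‖υ + μ • z‖ ^ (-γ) ≤ r ^ (-γ) :=
        Real.rpow_le_rpow_of_nonpos hr0 (not_lt.mp hz) (by linarith)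
      calc _ ≤ (2 * (1 + ‖z‖ ^ 2) ^ (-β / 2)) * r ^ (-γ) :=
            mul_le_mul hw h1 (by positivity) (by positivity)
        _ = _ := by ring
  have bound : ∀ μ : ℝ, 0 < μ →
      ENNReal.ofReal (μ ^ α) *
        ∫⁻ z in (Metric.ball (0 : EuclideanSpace ℝ (Fin N)) 4)ᶜ,
          ENNReal.ofReal ((1 + ‖z‖ ^ α) * (1 + ‖z‖ ^ 2) ^ (-(((N : ℝ) + 2 * s) / 2)) *
            ‖υ + μ • z‖ ^ (-γ)) ≤
      ENNReal.ofReal (μ ^ α) * (ENNReal.ofReal (2 * r ^ (-γ)) * W) +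
        ENNReal.ofReal (μ ^ (2 * s)) * (ENNReal.ofReal (2 * r ^ (-β)) * K) := by
    intro μ hμ
    have hpow : μ ^ α * (2 * (r / μ) ^ (-β)) * μ ^ (-(N : ℝ)) = μ ^ (2 * s) * (2 * r ^ (-β)) := by
      have e : μ ^ (2 * s) = μ ^ α * μ ^ β * μ ^ (-(N : ℝ)) := by
        rw [← Real.rpow_add hμ, ← Real.rpow_add hμ]; congr 1; rw [hβ]; ring
      rw [Real.div_rpow hr0.le hμ.le, Real.rpow_neg hμ.le β, div_inv_eq_mul, e]; ring
    calc _ ≤ ENNReal.ofReal (μ ^ α) * ∫⁻ z : EuclideanSpace ℝ (Fin N),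
          (ENNReal.ofReal (2 * r ^ (-γ)) * ENNReal.ofReal ((1 + ‖z‖ ^ 2) ^ (-β / 2)) +
          ENNReal.ofReal (2 * (r / μ) ^ (-β)) * g (υ + μ • z)) :=
          mul_le_mul_right ((setLIntegral_le_lintegral _ _).trans
            (lintegral_mono (pointwise μ hμ))) _
      _ = ENNReal.ofReal (μ ^ α) * (ENNReal.ofReal (2 * r ^ (-γ)) * W +
          ENNReal.ofReal (2 * (r / μ) ^ (-β)) * (ENNReal.ofReal (μ ^ (-(N : ℝ))) * K)) := by
          rw [lintegral_add_right _ (by fun_prop), lintegral_const_mul' _ _ ENNReal.ofReal_ne_top,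
            lintegral_const_mul' _ _ ENNReal.ofReal_ne_top, lintegral_comp_add_smul g hgm υ hμ]
      _ = _ := by
          rw [mul_add, ← mul_assoc (ENNReal.ofReal (μ ^ (2 * s))),
            ← ENNReal.ofReal_mul (by positivity : 0 ≤ μ ^ (2 * s)), ← hpow,
            ENNReal.ofReal_mul (p := μ ^ α * (2 * (r / μ) ^ (-β))) (by positivity),
            ENNReal.ofReal_mul (p := μ ^ α) (by positivity)]
          ring
  have lim : ∀ (a : ℝ) (C : ℝ≥0∞), 0 < a → C ≠ ∞ →
      Tendsto (fun μ : ℝ => ENNReal.ofReal (μ ^ a) * C) (𝓝[>] 0) (𝓝 0) := by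
    intro a C ha hC
    have h1 : Tendsto (fun μ : ℝ => μ ^ a) (𝓝[>] 0) (𝓝 0) := by
      have := (Real.continuousAt_rpow_const 0 a (Or.inr ha.le)).tendsto
      rw [Real.zero_rpow ha.ne'] at this
      exact this.mono_left nhdsWithin_le_nhds
    have h2 := ENNReal.Tendsto.mul_const (ENNReal.tendsto_ofReal h1) (Or.inr hC)
    simpa using h2
  have hlim := (lim α _ hα0 (ENNReal.mul_ne_top (ENNReal.ofReal_ne_top (r := 2 * r ^ (-γ)))
    hWfin.ne)).add (lim (2 * s) _ (by linarith)
      (ENNReal.mul_ne_top (ENNReal.ofReal_ne_top (r := 2 * r ^ (-β))) hKfin.ne))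
  rw [add_zero] at hlim
  refine tendsto_of_tendsto_of_tendsto_of_le_of_le' tendsto_const_nhds hlim
    (Eventually.of_forall fun _ => zero_le) ?_
  filter_upwards [self_mem_nhdsWithin] with μ hμ
  exact bound μ hμ
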